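/- If H is an amenable subgroup of a discrete group G, then there exists a state φ on C*_λ(G) such that φ(λ_g) = 1 for every g ∈ H and φ(λ_g) = 0 for every g ∈ G ∖ H. -/

import Mathlib

noncomputable section
open scoped ENNReal ComplexOrder lp
open MeasureTheory
set_option maxHeartbeats 1000000
set_option synthInstance.maxHeartbeats 1000000

universe u

variable {G : Type u} [Group G]

theorem translat_mem (g : G) (f : ℓ²(G, ℂ)) : Memℓp (fun h => f (g⁻¹ * h)) 2 := by
  have hf : Summable fun i : G => ‖f i‖ ^ (2 : ℝ≥0∞).toReal :=
    (memℓp_gen_iff (by norm_num)).1 (lp.memℓp f)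
  exact memℓp_gen ((Equiv.mulLeft g⁻¹).summable_iff.2 hf)

/-- The left regular representation of `g ∈ G` as a linear isometric bijection of `ℓ²(G)`,
given by `(λ_g ξ)(h) = ξ(g⁻¹ h)`. -/
def lregE (g : G) : ℓ²(G, ℂ) ≃ₗᵢ[ℂ] ℓ²(G, ℂ) :=
{ toFun := fun f => ⟨fun h => f (g⁻¹ * h), translat_mem g f⟩
  invFun := fun f => ⟨fun h => f (g * h), by
    have := translat_mem g⁻¹ f; simp only [inv_inv] at this; exact this⟩
  map_add' := by intro f₁ f₂; ext h; simp [lp.coeFn_add]; rfl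
  map_smul' := by intro c f; ext h; simp [lp.coeFn_smul]
  left_inv := by intro f; ext h; simp
  right_inv := by intro f; ext h; simp
  norm_map' := by
    intro f
    rw [lp.norm_eq_tsum_rpow (by norm_num) f, lp.norm_eq_tsum_rpow (by norm_num)]
    congr 1
    exact (Equiv.mulLeft g⁻¹).tsum_eq (fun h => ‖f h‖ ^ (2 : ℝ≥0∞).toReal) }

/-- The left regular representation `λ` as bounded operators on `ℓ²(G)`. -/
def lreg (g : G) : ℓ²(G, ℂ) →L[ℂ] ℓ²(G, ℂ) :=
  (lregE g).toContinuousLinearEquiv.toContinuousLinearMap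

variable (G) in
/-- The reduced group C*-algebra `C*_λ(G)`: the norm-closed star subalgebra of the algebra of
bounded operators on `ℓ²(G)` generated by the image of the left regular representation. -/
def redCstar : StarSubalgebra ℂ (ℓ²(G, ℂ) →L[ℂ] ℓ²(G, ℂ)) :=
  (StarAlgebra.adjoin ℂ (Set.range (lreg (G := G)))).topologicalClosure

/-- `λ_g` as an element of the reduced group C*-algebra. -/
def uu (g : G) : redCstar G :=
  ⟨lreg g, StarSubalgebra.le_topologicalClosure _ (StarAlgebra.subset_adjoin ℂ _ ⟨g, rfl⟩)⟩

attribute [irreducible] redCstar lreg lregE uu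

/-- A state on `C*_λ(G)`: a unital positive (continuous) linear functional. -/
def IsState (φ : WeakDual ℂ (redCstar G)) : Prop :=
  φ 1 = 1 ∧ ∀ a : redCstar G, 0 ≤ φ (star a * a)

/-- Left translation of a bounded function on a group `H`. -/
def translInfty {H : Type*} [Group H] (h : H) (f : lp (fun _ : H => ℝ) ∞) :
    lp (fun _ : H => ℝ) ∞ :=
  ⟨fun k => f (h⁻¹ * k), by
    apply memℓp_infty
    have : (Set.range fun k => ‖f (h⁻¹ * k)‖) = Set.range fun k => ‖f k‖ :=
      (Equiv.mulLeft h⁻¹).surjective.range_comp (fun k => ‖f k‖)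
    rw [this]
    exact memℓp_infty_iff.1 (lp.memℓp f)⟩

/-- A group `H` is amenable: there exists a left-invariant mean on `ℓ∞(H)`, i.e. a unital
positive linear functional invariant under left translation. -/
def IsAmenable (H : Type*) [Group H] : Prop :=
  ∃ m : lp (fun _ : H => ℝ) ∞ →ₗ[ℝ] ℝ,
    m 1 = 1 ∧ (∀ f : lp (fun _ : H => ℝ) ∞, (∀ k, 0 ≤ f k) → 0 ≤ m f) ∧
      ∀ (h : H) (f : lp (fun _ : H => ℝ) ∞), m (translInfty h f) = m f

theorem lreg_apply (g : G) (f : ℓ²(G, ℂ)) (h : G) : lreg g f h = f (g⁻¹ * h) := by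
  unfold lreg lregE
  rfl

theorem uu_coe (g : G) : ((uu g : redCstar G) : ℓ²(G, ℂ) →L[ℂ] ℓ²(G, ℂ)) = lreg g := by
  unfold uu
  rfl

open Classical in
/-- Reiter's property for an amenable subgroup, by Hahn-Banach separation. -/
theorem reiter (H : Subgroup G) (hA : IsAmenable H) (F : Finset H) (ε : ℝ) (hε : 0 < ε) :
    ∃ p : G → ℝ, (∀ x, 0 ≤ p x) ∧ (∀ x, x ∉ H → p x = 0) ∧ HasSum p 1 ∧
      ∀ h ∈ F, ∃ s, s < ε ∧ HasSum (fun x => |p ((h : G)⁻¹ * x) - p x|) s := by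
  obtain ⟨m, hm1, hmpos, hminv⟩ := hA
  let C : Set (F → lp (fun _ : G => ℝ) 1) := {w | ∃ p : G → ℝ, (∀ x, 0 ≤ p x) ∧
    (∀ x, x ∉ H → p x = 0) ∧ HasSum p 1 ∧
      ∀ (h : F) (x : G), w h x = p ((h : G)⁻¹ * x) - p x}
  have hC : Convex ℝ C := by
    rintro w ⟨p, hp0, hpH, hps, hpw⟩ v ⟨q, hq0, hqH, hqs, hqv⟩ a b ha hb hab
    refine ⟨fun x => a * p x + b * q x, fun x => ?_, fun x hx => ?_, ?_, fun h x => ?_⟩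
    · have := hp0 x
      have := hq0 x
      positivity
    · simp [hpH x hx, hqH x hx]
    · have := (hps.mul_left a).add (hqs.mul_left b)
      simpa [hab] using this
    · have : (a • w + b • v) h x = a * w h x + b * v h x := rfl
      rw [this, hpw, hqv]
      ring
  have hmem : ∀ k : H, (fun h : F => lp.single (E := fun _ : G => ℝ) 1 ((h : G) * k) (1 : ℝ)
      - lp.single (E := fun _ : G => ℝ) 1 (k : G) (1 : ℝ)) ∈ C := by
    intro k
    refine ⟨fun x => if x = k then 1 else 0, fun x => ?_, fun x hx => ?_, ?_, fun h x => ?_⟩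
    · dsimp only
      split_ifs <;> norm_num
    · have : x ≠ k := fun h => hx (h ▸ k.2)
      simp [this]
    · exact hasSum_ite_eq (k : G) (1 : ℝ)
    · rw [lp.coeFn_sub, Pi.sub_apply, lp.single_apply, lp.single_apply, Pi.single_apply,
        Pi.single_apply]
      simp only [inv_mul_eq_iff_eq_mul]
  have h0 : (0 : F → lp (fun _ : G => ℝ) 1) ∈ closure C := by
    by_contra hn
    obtain ⟨L, u, hu0, hu⟩ := geometric_hahn_banach_point_closed hC.closure isClosed_closure hn
    rw [map_zero] at hu0
    let δ : G → lp (fun _ : G => ℝ) 1 := fun k => lp.single (E := fun _ : G => ℝ) 1 k (1 : ℝ)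
    have hδ : ∀ k, ‖δ k‖ = 1 := fun k => by
      simp only [δ]
      rw [lp.norm_single (by norm_num)]
      simp
    let f : F → lp (fun _ : H => ℝ) ∞ := fun h => ⟨fun k => L (Pi.single h (δ k)), by
      apply memℓp_infty
      refine ⟨‖L‖, ?_⟩
      rintro _ ⟨k, rfl⟩
      refine (L.le_opNorm _).trans ?_
      rw [Pi.norm_single, hδ, mul_one]⟩
    have hf : ∀ h k, f h k = L (Pi.single h (δ k)) := fun h k => rfl
    have hsum : ∀ k : H, u < ∑ h : F, (f h ((h : H) * k) - f h k) := by
      intro k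
      have h1 := hu _ (subset_closure (hmem k))
      refine h1.trans_eq ?_
      rw [← Finset.univ_sum_single (fun h : F => lp.single (E := fun _ : G => ℝ) 1 ((h : G) * k) (1 : ℝ)
      - lp.single (E := fun _ : G => ℝ) 1 (k : G) (1 : ℝ)), map_sum]
      refine Finset.sum_congr rfl fun h _ => ?_
      rw [Pi.single_sub, map_sub, hf, hf]
      rfl
    have hpos := hmpos ((∑ h : F, (translInfty (h : H)⁻¹ (f h) - f h)) - u • 1) (by
      intro k
      have h2 := (hsum k).le
      rw [lp.coeFn_sub, lp.coeFn_sum, Pi.sub_apply, Finset.sum_apply, lp.coeFn_smul]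
      simp only [lp.coeFn_sub, Pi.sub_apply, Pi.smul_apply, lp.infty_coeFn_one, Pi.one_apply,
        smul_eq_mul, mul_one, sub_nonneg]
      refine h2.trans_eq (Finset.sum_congr rfl fun h _ => ?_)
      simp [translInfty])
    rw [map_sub, map_sum, map_smul, hm1] at hpos
    simp only [map_sub, hminv, sub_self, Finset.sum_const_zero] at hpos
    simp at hpos
    linarith
  obtain ⟨w, ⟨p, hp0, hpH, hps, hpw⟩, hw⟩ := Metric.mem_closure_iff.1 h0 ε hε
  refine ⟨p, hp0, hpH, hps, fun h hh => ⟨‖w ⟨h, hh⟩‖, ?_, ?_⟩⟩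
  · rw [dist_zero_left] at hw
    exact (norm_le_pi_norm w _).trans_lt hw
  · have := lp.hasSum_norm (p := 1) (by norm_num) (w ⟨h, hh⟩)
    simpa [hpw] using this

theorem almost_inv (H : Subgroup G) (hA : IsAmenable H) (F : Finset H) (ε : ℝ) (hε : 0 < ε) :
    ∃ ξ : ℓ²(G, ℂ), ‖ξ‖ = 1 ∧ (∀ x, x ∉ H → ξ x = 0) ∧
      ∀ h ∈ F, ‖lreg (h : G) ξ - ξ‖ ^ 2 < ε := by
  obtain ⟨p, hp0, hpH, hps, hp⟩ := reiter H hA F ε hε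
  have e : ∀ x, ‖((√(p x) : ℝ) : ℂ)‖ ^ (2 : ℝ≥0∞).toReal = p x := fun x => by
    simp [Real.sq_sqrt (hp0 x)]
  let ξ : ℓ²(G, ℂ) := ⟨fun x => ((√(p x) : ℝ) : ℂ), memℓp_gen (by simpa only [e] using hps.summable)⟩
  have hξ : ∀ x, ξ x = ((√(p x) : ℝ) : ℂ) := fun x => rfl
  refine ⟨ξ, ?_, fun x hx => by simp [hξ, hpH x hx], fun h hh => ?_⟩
  · have h1 := lp.hasSum_norm (p := 2) (by norm_num) ξ
    simp only [hξ, e] at h1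
    have := h1.unique hps
    simp only [ENNReal.toReal_ofNat, Real.rpow_ofNat] at this
    exact (pow_eq_one_iff_of_nonneg (norm_nonneg _) two_ne_zero).1 this
  · obtain ⟨s, hs, hsum⟩ := hp h hh
    refine lt_of_le_of_lt ?_ hs
    have h1 := lp.hasSum_norm (p := 2) (by norm_num) (lreg (h : G) ξ - ξ)
    have h2 := hasSum_le (fun x => ?_) h1 hsum
    · simpa using h2
    · rw [lp.coeFn_sub, Pi.sub_apply, lreg_apply, hξ, hξ, ← Complex.ofReal_sub, Complex.norm_real]
      simp only [ENNReal.toReal_ofNat, Real.rpow_ofNat, Real.norm_eq_abs]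
      generalize hxa : p ((h : G)⁻¹ * x) = a
      have ha : 0 ≤ a := hxa ▸ hp0 _
      have hb := hp0 x
      generalize p x = b at hb ⊢
      have hA' := Real.sqrt_nonneg a
      have hB' := Real.sqrt_nonneg b
      have : |a - b| = |√a - √b| * (√a + √b) := by
        rw [← abs_of_nonneg (add_nonneg hA' hB'), ← abs_mul]
        congr 1
        nlinarith [Real.sq_sqrt ha, Real.sq_sqrt hb]
      rw [this, sq]
      refine mul_le_mul_of_nonneg_left ?_ (abs_nonneg _)
      rw [abs_le]
      constructor <;> linarith

/-- Vector functional. -/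
def vec (ξ : ℓ²(G, ℂ)) : redCstar G →L[ℂ] ℂ :=
  LinearMap.mkContinuous
    { toFun := fun a => inner ℂ ξ ((a : ℓ²(G, ℂ) →L[ℂ] ℓ²(G, ℂ)) ξ)
      map_add' := fun a b => by simp [inner_add_right]
      map_smul' := fun c a => by simp [inner_smul_right] } (‖ξ‖ * ‖ξ‖) (fun a => by
        refine (norm_inner_le_norm (𝕜 := ℂ) ξ ((a : ℓ²(G, ℂ) →L[ℂ] ℓ²(G, ℂ)) ξ)).trans ?_
        have := (a : ℓ²(G, ℂ) →L[ℂ] ℓ²(G, ℂ)).le_opNorm ξ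
        rw [mul_assoc]
        refine mul_le_mul_of_nonneg_left (this.trans_eq (mul_comm _ _)) (norm_nonneg _))

theorem vec_apply (ξ : ℓ²(G, ℂ)) (a : redCstar G) :
    vec ξ a = inner ℂ ξ ((a : ℓ²(G, ℂ) →L[ℂ] ℓ²(G, ℂ)) ξ) := rfl

theorem vec_norm (ξ : ℓ²(G, ℂ)) (h : ‖ξ‖ = 1) (a : redCstar G) : ‖vec ξ a‖ ≤ ‖a‖ := by
  rw [vec_apply]
  refine (norm_inner_le_norm (𝕜 := ℂ) ξ ((a : ℓ²(G, ℂ) →L[ℂ] ℓ²(G, ℂ)) ξ)).trans ?_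
  have := (a : ℓ²(G, ℂ) →L[ℂ] ℓ²(G, ℂ)).le_opNorm ξ
  rw [h, mul_one] at this
  rw [h, one_mul]
  exact this

theorem vec_pos (ξ : ℓ²(G, ℂ)) (a : redCstar G) : 0 ≤ vec ξ (star a * a) := by
  rw [vec_apply]
  have : ((star a * a : redCstar G) : ℓ²(G, ℂ) →L[ℂ] ℓ²(G, ℂ)) ξ =
    ContinuousLinearMap.adjoint (a : ℓ²(G, ℂ) →L[ℂ] ℓ²(G, ℂ))
      ((a : ℓ²(G, ℂ) →L[ℂ] ℓ²(G, ℂ)) ξ) := rfl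
  rw [this, ContinuousLinearMap.adjoint_inner_right, inner_self_eq_norm_sq_to_K]
  have h := Complex.zero_le_real.2 (sq_nonneg ‖(a : ℓ²(G, ℂ) →L[ℂ] ℓ²(G, ℂ)) ξ‖)
  rw [Complex.ofReal_pow] at h
  exact h

theorem ball_aux {E : Type*} [SeminormedAddCommGroup E] [NormedSpace ℂ E] (f : StrongDual ℂ E)
    (h : ∀ x, ‖f x‖ ≤ ‖x‖) :
    StrongDual.toWeakDual f ∈ WeakDual.toStrongDual ⁻¹' (Metric.closedBall (0 : StrongDual ℂ E) 1) := by
  show f ∈ Metric.closedBall (0 : StrongDual ℂ E) 1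
  rw [mem_closedBall_zero_iff]
  exact f.opNorm_le_bound zero_le_one (fun x => by simpa using h x)

open Filter Topology

/-- If `H` is an amenable subgroup of `G`, then the indicator function of `H` extends to a
state on `C*_λ(G)`. -/
theorem exists_state_indicator_of_amenable_subgroup (G : Type u) [Group G]
    (H : Subgroup G) (hA : IsAmenable H) :
    ∃ φ : WeakDual ℂ (redCstar G), IsState φ ∧ (∀ g : G, g ∈ H → φ (uu g) = 1) ∧
      ∀ g : G, g ∉ H → φ (uu g) = 0 := by
  classical
  choose ξ hξ1 hξH hξF using fun i : Finset H × ℕ =>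
    almost_inv H hA i.1 (((i.2 : ℝ) + 1)⁻¹) (by positivity)
  let 𝒰 : Ultrafilter (Finset H × ℕ) := Ultrafilter.of atTop
  have h𝒰 : (𝒰 : Filter (Finset H × ℕ)) ≤ atTop := Ultrafilter.of_le _
  let ω : Finset H × ℕ → WeakDual ℂ (redCstar G) := fun i => StrongDual.toWeakDual (vec (ξ i))
  have hω : ∀ i a, ω i a = vec (ξ i) a := fun i a => rfl
  have hK := WeakDual.isCompact_closedBall (𝕜 := ℂ) (E := redCstar G) 0 1
  obtain ⟨φ, -, hφ⟩ := hK.ultrafilter_le_nhds (𝒰.map ω) (by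
    rw [le_principal_iff]
    refine Filter.mem_map.2 (Filter.univ_mem' fun i => ?_)
    exact ball_aux (vec (ξ i)) (vec_norm _ (hξ1 i)))
  have hT : ∀ a : redCstar G, Tendsto (fun i => vec (ξ i) a) 𝒰 (𝓝 (φ a)) := fun a =>
    ((WeakDual.eval_continuous a).tendsto φ).comp hφ
  refine ⟨φ, ⟨?_, fun a => ?_⟩, fun g hg => ?_, fun g hg => ?_⟩
  · refine tendsto_nhds_unique (hT 1) (tendsto_const_nhds.congr fun i => ?_)
    rw [vec_apply]
    show 1 = inner ℂ (ξ i) (ξ i)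
    rw [inner_self_eq_norm_sq_to_K, hξ1]
    simp
  · exact ge_of_tendsto (hT _) (Eventually.of_forall fun i => vec_pos _ _)
  · refine tendsto_nhds_unique (hT _) ?_
    rw [tendsto_iff_norm_sub_tendsto_zero]
    have hlim : Tendsto (fun i : Finset H × ℕ => √(((i.2 : ℝ) + 1)⁻¹)) 𝒰 (𝓝 0) := by
      have h1 : Tendsto (fun n : ℕ => √(((n : ℝ) + 1)⁻¹)) atTop (𝓝 0) := by
        have := (tendsto_one_div_add_atTop_nhds_zero_nat (𝕜 := ℝ)).sqrt
        simpa using this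
      refine (h1.comp ?_).mono_left h𝒰
      rw [← prod_atTop_atTop_eq]
      exact tendsto_snd
    refine squeeze_zero' (Eventually.of_forall fun i => norm_nonneg _) ?_ hlim
    have hev : ∀ᶠ i : Finset H × ℕ in 𝒰, (⟨g, hg⟩ : H) ∈ i.1 := by
      refine h𝒰 ?_
      filter_upwards [eventually_ge_atTop (({⟨g, hg⟩} : Finset H), 0)] with i hi
      exact hi.1 (Finset.mem_singleton_self _)
    filter_upwards [hev] with i hi
    have h1 := (hξF i _ hi).le
    have h2 : vec (ξ i) (uu g) - 1 = inner ℂ (ξ i) (lreg g (ξ i) - ξ i) := by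
      rw [vec_apply, uu_coe, inner_sub_right, inner_self_eq_norm_sq_to_K, hξ1]
      simp
    rw [h2]
    refine (norm_inner_le_norm _ _).trans ?_
    rw [hξ1, one_mul]
    exact Real.le_sqrt_of_sq_le h1
  · refine tendsto_nhds_unique (hT _) (tendsto_const_nhds.congr fun i => ?_)
    rw [vec_apply, uu_coe, lp.inner_eq_tsum]
    symm
    refine (tsum_congr fun x => ?_).trans tsum_zero
    rw [lreg_apply]
    by_cases hx : x ∈ H
    · rw [hξH i (g⁻¹ * x), inner_zero_right]
      intro h
      exact hg (by simpa using H.mul_mem hx (H.inv_mem h))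
    · rw [hξH i x hx, inner_zero_left]
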